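/- arXiv:2011.11664 — 5 statements merged into one kernel-verified Lean document; each statement's English description precedes it below -/
import Mathlib

section
/- Assume ω is alternating and nondegenerate on A. Let T ⊆ B* be a subspace of the dual space of B and set A₀ := {a ∈ A : φ(ι(a)) = 0 for all φ ∈ T}. Assume A₀ ∩ A₀^⊥ω = {0}, and let V ⊆ C be a subspace with dim(A₀ ∩ u(V)) + 1 ≥ dim u(V). Then the subspace {φ ∘ ι : φ ∈ T and φ vanishes on V^⊥β} of the dual space A* has dimension at most 1. (Abstract form of the paper's Lemma [lm:proj-def]: up to purely relative deformations, the deformations inside an affine invariant manifold M supported on an equivalence class of M-parallel cylinders form a space of dimension at most 1. Here T abstracts the tangent space TM ⊆ H¹(X,z;ℂ); the hypothesis A₀ ∩ A₀^⊥ω = {0} abstracts the Avila–Eskin–Möller theorem that ι*(TM) is symplectic; and the dimension hypothesis abstracts the fact that the circumference curves spanning V are M-parallel.) -/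
open Module

/-- For a bilinear pairing `β : V × W → K` and a subspace `S ⊆ W`, the left perp
`S^⊥β = {v ∈ V : β(v, s) = 0 for all s ∈ S}`. -/
def perp {K V W : Type*} [Field K] [AddCommGroup V] [Module K V]
    [AddCommGroup W] [Module K W]
    (β : V →ₗ[K] W →ₗ[K] K) (S : Submodule K W) : Submodule K V where
  carrier := {v | ∀ s ∈ S, β v s = 0}
  add_mem' := by
    intro a b ha hb s hs
    simp [ha s hs, hb s hs]
  zero_mem' := by
    intro s hs
    simp
  smul_mem' := by
    intro c v hv s hs
    simp [hv s hs]

/-!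
A functional of the form `φ ∘ ι` with `φ` vanishing on `V^⊥β` vanishes on `ι⁻¹(V^⊥β)`, which by
adjunction is `u(V)^⊥ω`; since `u(V)` is finite-dimensional, such a functional is `ω(·, w)` for some
`w ∈ u(V)`. If moreover `φ ∈ T`, it kills `A₀`, so `w` lies in the `ω`-orthogonal of `A₀`. That
orthogonal meets `A₀` trivially, hence `w` ranges over a subspace of `u(V)` disjoint from
`A₀ ∩ u(V)`.
-/

section Perp

variable {K V W : Type*} [Field K] [AddCommGroup V] [Module K V] [AddCommGroup W] [Module K W]

theorem mem_perp {β : V →ₗ[K] W →ₗ[K] K} {S : Submodule K W} {v : V} :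
    v ∈ perp β S ↔ ∀ s ∈ S, β v s = 0 :=
  .rfl

theorem perp_eq_comap_dualAnnihilator (β : V →ₗ[K] W →ₗ[K] K) (S : Submodule K W) :
    perp β S = S.dualAnnihilator.comap β := by
  ext v
  simp [mem_perp]

theorem perp_eq_dualCoannihilator_map_flip (β : V →ₗ[K] W →ₗ[K] K) (S : Submodule K W) :
    perp β S = (S.map β.flip).dualCoannihilator := by
  ext v
  simp [mem_perp]

theorem dualAnnihilator_perp (β : V →ₗ[K] W →ₗ[K] K) (S : Submodule K W) [FiniteDimensional K S] :
    (perp β S).dualAnnihilator = S.map β.flip := by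
  rw [perp_eq_dualCoannihilator_map_flip, Subspace.dualCoannihilator_dualAnnihilator_eq]

theorem perp_flip_of_isRefl {ω : V →ₗ[K] V →ₗ[K] K} (hω : ω.IsRefl) (S : Submodule K V) :
    perp ω.flip S = perp ω S := by
  ext v
  simp [mem_perp, hω.eq_iff]

theorem comap_perp_of_adjoint {V' W' : Type*} [AddCommGroup V'] [Module K V']
    [AddCommGroup W'] [Module K W'] {ω : V →ₗ[K] W →ₗ[K] K} {β : V' →ₗ[K] W' →ₗ[K] K}
    {ι : V →ₗ[K] V'} {u : W' →ₗ[K] W}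
    (hadj : ∀ x v, β (ι x) v = ω x (u v)) (S : Submodule K W') :
    (perp β S).comap ι = perp ω (S.map u) := by
  ext x
  simp [mem_perp, hadj]

end Perp

theorem finrank_inf_add_finrank_inf_le_of_disjoint {K V : Type*} [DivisionRing K] [AddCommGroup V]
    [Module K V] {M N : Submodule K V} (hMN : Disjoint M N) (U : Submodule K V)
    [FiniteDimensional K U] :
    finrank K ↥(U ⊓ M) + finrank K ↥(U ⊓ N) ≤ finrank K U := by
  have hinf : U ⊓ M ⊓ (U ⊓ N) = ⊥ := (hMN.mono inf_le_right inf_le_right).eq_bot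
  calc
    finrank K ↥(U ⊓ M) + finrank K ↥(U ⊓ N)
      = finrank K ↥((U ⊓ M) ⊔ (U ⊓ N)) := by
        rw [← Submodule.finrank_sup_add_finrank_inf_eq, hinf, finrank_bot, add_zero]
    _ ≤ finrank K U := Submodule.finrank_mono (sup_le inf_le_left inf_le_left)

section Adjunction

variable {K A B C : Type*} [Field K] [AddCommGroup A] [Module K A] [AddCommGroup B] [Module K B]
  [AddCommGroup C] [Module K C] {β : B →ₗ[K] C →ₗ[K] K} {ι : A →ₗ[K] B}

theorem map_dualMap_inf_dualAnnihilator_perp_le {A' : Type*} [AddCommGroup A'] [Module K A']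
    {ω : A →ₗ[K] A' →ₗ[K] K} {u : C →ₗ[K] A'} (hadj : ∀ x v, β (ι x) v = ω x (u v))
    {T : Submodule K (Dual K B)} {A₀ : Submodule K A} (hA₀ : ∀ a ∈ A₀, ∀ φ ∈ T, φ (ι a) = 0)
    (V : Submodule K C) [FiniteDimensional K (V.map u)] :
    (T ⊓ (perp β V).dualAnnihilator).map ι.dualMap ≤ (V.map u ⊓ perp ω.flip A₀).map ω.flip := by
  have hT : T.map ι.dualMap ≤ A₀.dualAnnihilator := by
    rintro _ ⟨φ, hφ, rfl⟩
    exact (Submodule.mem_dualAnnihilator _).2 fun a ha ↦ hA₀ a ha φ hφ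
  have hV : (perp β V).dualAnnihilator.map ι.dualMap ≤ (V.map u).map ω.flip := by
    rw [← dualAnnihilator_perp, ← comap_perp_of_adjoint hadj]
    exact Submodule.dualAnnihilator_map_dualMap_le _ _
  calc
    (T ⊓ (perp β V).dualAnnihilator).map ι.dualMap
      ≤ T.map ι.dualMap ⊓ (perp β V).dualAnnihilator.map ι.dualMap := Submodule.map_inf_le _
    _ ≤ (V.map u).map ω.flip ⊓ A₀.dualAnnihilator :=
      le_inf (inf_le_right.trans hV) (inf_le_left.trans hT)
    _ = (V.map u ⊓ perp ω.flip A₀).map ω.flip := by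
      rw [Submodule.map_inf_eq_map_inf_comap, perp_eq_comap_dualAnnihilator]

theorem proj_def_dim_le_one_general {ω : A →ₗ[K] A →ₗ[K] K} {u : C →ₗ[K] A}
    (hadj : ∀ x v, β (ι x) v = ω x (u v))
    {T : Submodule K (Dual K B)} {A₀ : Submodule K A} (hA₀ : ∀ a ∈ A₀, ∀ φ ∈ T, φ (ι a) = 0)
    (hdisj : Disjoint A₀ (perp ω.flip A₀)) (V : Submodule K C) [FiniteDimensional K (V.map u)] :
    finrank K ↥((T ⊓ (perp β V).dualAnnihilator).map ι.dualMap) + finrank K ↥(A₀ ⊓ V.map u) ≤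
      finrank K (V.map u) := by
  have hle : finrank K ↥((T ⊓ (perp β V).dualAnnihilator).map ι.dualMap) ≤
      finrank K ↥(V.map u ⊓ perp ω.flip A₀) :=
    (Submodule.finrank_mono (map_dualMap_inf_dualAnnihilator_perp_le hadj hA₀ V)).trans
      (Submodule.finrank_map_le _ _)
  calc
    finrank K ↥((T ⊓ (perp β V).dualAnnihilator).map ι.dualMap) + finrank K ↥(A₀ ⊓ V.map u)
      ≤ finrank K ↥(V.map u ⊓ perp ω.flip A₀) + finrank K ↥(V.map u ⊓ A₀) := by
        rw [inf_comm A₀]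
        gcongr
    _ ≤ finrank K (V.map u) := finrank_inf_add_finrank_inf_le_of_disjoint hdisj.symm _

end Adjunction

/-- Abstract form of Lemma `lm:proj-def`: assume `ω` is alternating and nondegenerate on `A`,
`T ⊆ B*` is a subspace of the dual of `B`, `A₀ = {a ∈ A : φ(ι a) = 0 ∀ φ ∈ T}` satisfies
`A₀ ∩ A₀^⊥ω = 0`, and `V ⊆ C` satisfies `dim(A₀ ∩ u(V)) + 1 ≥ dim u(V)`.  Then the subspace
`{φ ∘ ι : φ ∈ T, φ vanishes on V^⊥β} ⊆ A*` has dimension at most `1`. -/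
theorem proj_def_dim_le_one {K A B C : Type*} [Field K]
    [AddCommGroup A] [Module K A] [FiniteDimensional K A]
    [AddCommGroup B] [Module K B] [FiniteDimensional K B]
    [AddCommGroup C] [Module K C] [FiniteDimensional K C]
    (ω : A →ₗ[K] A →ₗ[K] K) (β : B →ₗ[K] C →ₗ[K] K)
    (ι : A →ₗ[K] B) (u : C →ₗ[K] A)
    (hadj : ∀ (x : A) (v : C), β (ι x) v = ω x (u v))
    (halt : ∀ a : A, ω a a = 0)
    (hnd : ∀ a : A, (∀ a' : A, ω a a' = 0) → a = 0)
    (T : Submodule K (Module.Dual K B))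
    (A₀ : Submodule K A)
    (hA₀ : ∀ a : A, a ∈ A₀ ↔ ∀ φ ∈ T, φ (ι a) = 0)
    (hsymp : A₀ ⊓ perp ω A₀ = ⊥)
    (V : Submodule K C)
    (hV : finrank K ↥(A₀ ⊓ Submodule.map u V) + 1 ≥ finrank K ↥(Submodule.map u V)) :
    finrank K ↥(Submodule.map ι.dualMap (T ⊓ (perp β V).dualAnnihilator)) ≤ 1 := by
  have hdisj : Disjoint A₀ (perp ω.flip A₀) := by
    rwa [perp_flip_of_isRefl (LinearMap.IsAlt.isRefl halt), disjoint_iff]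
  have hdim := proj_def_dim_le_one_general hadj (fun a ↦ (hA₀ a).1) hdisj V
  omega
end

section
/- Suppose the vectors F_1, …, F_m span a subspace N ⊆ (n → K) and have pivots p_1, …, p_m such that p_l ∈ H whenever supp_H(F_l) ≠ ∅. Then the equivalence relation on H generated by the relation 'e and e′ both lie in some N-primitive subset of H' coincides with the equivalence relation on H generated by the relation 'e and e′ both lie in supp_H(F_l) for some l = 1, …, m'. (Abstract form of the paper's Lemma [lm:Mrref]: two horizontal nodes are M-cross-related if and only if they are rref-cross-related with respect to the reduced row echelon basis of defining equations.) -/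
/-- The set `supp_H(F) = {h ∈ H : F h ≠ 0}` of elements of `H` "crossed" by `F`. -/
def suppH {K n : Type*} [Field K] (H : Set n) (F : n → K) : Set n :=
  {h | h ∈ H ∧ F h ≠ 0}

/-- A nonempty set `S ⊆ H` is `N`-correlated if `S = supp_H(F)` for some `F ∈ N`. -/
def Correlated {K n : Type*} [Field K] (N : Submodule K (n → K)) (H : Set n)
    (S : Set n) : Prop :=
  S.Nonempty ∧ ∃ F ∈ N, S = suppH H F

/-- An `N`-correlated set is `N`-primitive if no nonempty proper subset is `N`-correlated. -/
def Primitive {K n : Type*} [Field K] (N : Submodule K (n → K)) (H : Set n)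
    (S : Set n) : Prop :=
  Correlated N H S ∧ ∀ S' : Set n, S' ⊂ S → S'.Nonempty → ¬ Correlated N H S'

/-!
Let `C` be a class of the relation generated by the supports `supp_H(F_l)`. Every `supp_H(F_l)` lies
in `C` or misses it, so truncating a vector of `N` to `C` gives, on `H`, another vector of `N`: drop
the `F_l` that miss `C`. Hence `S ∩ C` is correlated or empty for every correlated `S`, and a
primitive set lies in a single class.

Conversely each nonempty `supp_H(F_l)` is primitive. The coefficient of `F_k` in `G ∈ N` is nonzero
only if `G (p k) ≠ 0`; when `supp_H(G) ⊆ supp_H(F_l)` this excludes every `k ≠ l` with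
`supp_H(F_k)` nonempty, so `G` is a multiple of `F_l` on `H`.
-/

section

variable {K n : Type*} [Field K]

lemma suppH_congr {H : Set n} {F G : n → K} (h : H.EqOn F G) : suppH H F = suppH H G := by
  ext x
  exact and_congr_right fun hx => by rw [h hx]

lemma suppH_indicator (H C : Set n) (F : n → K) : suppH H (C.indicator F) = suppH H F ∩ C := by
  ext x
  simp only [suppH, Set.mem_ofPred_eq, Set.mem_inter_iff, ne_eq, Set.indicator_apply_eq_zero,
    Classical.not_imp]
  tauto

lemma suppH_smul (H : Set n) {c : K} (hc : c ≠ 0) (F : n → K) : suppH H (c • F) = suppH H F := by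
  ext x
  simp only [suppH, Set.mem_ofPred_eq, Pi.smul_apply, smul_ne_zero_iff_right hc]

lemma primitive_iff_minimal {N : Submodule K (n → K)} {H S : Set n} :
    Primitive N H S ↔ Minimal (Correlated N H) S := by
  rw [Set.minimal_iff_forall_ssubset]
  exact and_congr_right fun _ =>
    ⟨fun h S' hS' hcor => h S' hS' hcor.1 hcor, fun h S' hS' _ => h hS'⟩

/-- The paper's `M`-cross-relation: the equivalence relation generated by lying in a common
`N`-primitive set. As a relation on all of `n`, it relates elements outside `H` only to
themselves. -/
abbrev CrossRelated (N : Submodule K (n → K)) (H : Set n) : n → n → Prop :=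
  Relation.EqvGen fun a b => ∃ S : Set n, Primitive N H S ∧ a ∈ S ∧ b ∈ S

/-- The paper's rref-cross-relation: the equivalence relation generated by being crossed by a
common member of the family `F`. As a relation on all of `n`, it relates elements outside `H` only
to themselves. -/
abbrev RrefCrossRelated {ι : Type*} (H : Set n) (F : ι → n → K) : n → n → Prop :=
  Relation.EqvGen fun a b => ∃ l, a ∈ suppH H (F l) ∧ b ∈ suppH H (F l)

/-- The family `F` has pivots `p`, as the rows of a matrix in reduced row echelon form do, up to
scaling and ordering. -/
structure HasPivots {ι : Type*} (F : ι → n → K) (p : ι → n) : Prop where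
  apply_self_ne_zero : ∀ l, F l (p l) ≠ 0
  apply_eq_zero : ∀ k l, k ≠ l → F k (p l) = 0

section Truncation

variable {H C : Set n} {s : Set (n → K)}

lemma exists_mem_span_eqOn_indicator
    (hs : ∀ F ∈ s, suppH H F ⊆ C ∨ Disjoint (suppH H F) C)
    {G : n → K} (hG : G ∈ Submodule.span K s) :
    ∃ G' ∈ Submodule.span K s, H.EqOn G' (C.indicator G) := by
  induction hG using Submodule.span_induction with
  | mem F hF =>
    rcases hs F hF with hsub | hdisj
    · refine ⟨F, Submodule.subset_span hF, fun h hh => Eq.symm ?_⟩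
      exact Set.indicator_apply_eq_self.2 fun hC => not_not.1 fun hne => hC (hsub ⟨hh, hne⟩)
    · refine ⟨0, zero_mem _, fun h hh => Eq.symm ?_⟩
      exact Set.indicator_apply_eq_zero.2 fun hC =>
        not_not.1 fun hne => Set.disjoint_left.1 hdisj ⟨hh, hne⟩ hC
  | zero => exact ⟨0, zero_mem _, fun h _ => by rw [Set.indicator_zero']⟩
  | add G₁ G₂ _ _ ih₁ ih₂ =>
    obtain ⟨G₁', hG₁', h₁⟩ := ih₁
    obtain ⟨G₂', hG₂', h₂⟩ := ih₂
    refine ⟨G₁' + G₂', add_mem hG₁' hG₂', fun h hh => ?_⟩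
    rw [Set.indicator_add', Pi.add_apply, Pi.add_apply, h₁ hh, h₂ hh]
  | smul c G _ ih =>
    obtain ⟨G', hG', h'⟩ := ih
    refine ⟨c • G', Submodule.smul_mem _ c hG', fun h hh => ?_⟩
    calc (c • G') h = c • C.indicator G h := congrArg (c • ·) (h' hh)
      _ = C.indicator (c • G) h := (Set.indicator_const_smul_apply C c G h).symm

lemma Correlated.inter_of_subset_or_disjoint
    (hs : ∀ F ∈ s, suppH H F ⊆ C ∨ Disjoint (suppH H F) C)
    {S : Set n} (hS : Correlated (Submodule.span K s) H S) (hne : (S ∩ C).Nonempty) :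
    Correlated (Submodule.span K s) H (S ∩ C) := by
  obtain ⟨-, G, hG, rfl⟩ := hS
  obtain ⟨G', hG', heq⟩ := exists_mem_span_eqOn_indicator hs hG
  exact ⟨hne, G', hG', by rw [suppH_congr heq, suppH_indicator]⟩

lemma Primitive.subset_of_subset_or_disjoint
    (hs : ∀ F ∈ s, suppH H F ⊆ C ∨ Disjoint (suppH H F) C)
    {S : Set n} (hS : Primitive (Submodule.span K s) H S) (hne : (S ∩ C).Nonempty) : S ⊆ C :=
  have hinter := hS.1.inter_of_subset_or_disjoint hs hne
  Set.inter_eq_left.1 ((primitive_iff_minimal.1 hS).eq_of_subset hinter Set.inter_subset_left)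

end Truncation

section Families

variable {ι : Type*} {H : Set n} {F : ι → n → K}

lemma suppH_subset_or_disjoint_rrefCrossRelated (l : ι) (a : n) :
    suppH H (F l) ⊆ {x | RrefCrossRelated H F a x} ∨
      Disjoint (suppH H (F l)) {x | RrefCrossRelated H F a x} := by
  refine or_iff_not_imp_right.2 fun hmeet x hx => ?_
  obtain ⟨y, hy, hay⟩ := Set.not_disjoint_iff.1 hmeet
  exact .trans _ _ _ hay (.rel _ _ ⟨l, hy, hx⟩)

lemma Primitive.rrefCrossRelated {S : Set n}
    (hS : Primitive (Submodule.span K (Set.range F)) H S) {a b : n} (ha : a ∈ S) (hb : b ∈ S) :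
    RrefCrossRelated H F a b := by
  have hclass : S ⊆ {x | RrefCrossRelated H F a x} :=
    hS.subset_of_subset_or_disjoint
      (Set.forall_mem_range.2 fun l => suppH_subset_or_disjoint_rrefCrossRelated l a)
      ⟨a, ha, .refl a⟩
  exact hclass hb

lemma linearCombination_apply_eq_of_forall_ne (c : ι →₀ K) {l : ι} {x : n}
    (h : ∀ k, k ≠ l → c k * F k x = 0) :
    Finsupp.linearCombination K F c x = c l * F l x := by
  rw [Finsupp.linearCombination_apply, Finsupp.sum, Finset.sum_apply]
  refine Finset.sum_eq_single l (fun k _ => h k) fun hl => ?_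
  rw [Finsupp.notMem_support_iff.1 hl, zero_smul, Pi.zero_apply]

namespace HasPivots

variable {p : ι → n}

lemma linearCombination_apply_pivot (hF : HasPivots F p) (c : ι →₀ K) (l : ι) :
    Finsupp.linearCombination K F c (p l) = c l * F l (p l) :=
  linearCombination_apply_eq_of_forall_ne c fun k hkl => by rw [hF.apply_eq_zero k l hkl, mul_zero]

lemma exists_eqOn_smul_of_suppH_subset (hF : HasPivots F p)
    (hpH : ∀ l, (suppH H (F l)).Nonempty → p l ∈ H) {l : ι} {G : n → K}
    (hG : G ∈ Submodule.span K (Set.range F)) (hGl : suppH H G ⊆ suppH H (F l)) :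
    ∃ a : K, H.EqOn G (a • F l) := by
  rw [← Finsupp.range_linearCombination] at hG
  obtain ⟨c, rfl⟩ := hG
  have coeff_eq_zero {k : ι} (hkl : k ≠ l) (hk : (suppH H (F k)).Nonempty) : c k = 0 := by
    by_contra hck
    have hpk : p k ∈ suppH H (Finsupp.linearCombination K F c) := by
      refine ⟨hpH k hk, ?_⟩
      rw [hF.linearCombination_apply_pivot]
      exact mul_ne_zero hck (hF.apply_self_ne_zero k)
    exact (hGl hpk).2 (hF.apply_eq_zero l k hkl.symm)
  refine ⟨c l, fun h hh => linearCombination_apply_eq_of_forall_ne c fun k hkl => ?_⟩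
  by_cases hk : F k h = 0
  · rw [hk, mul_zero]
  · rw [coeff_eq_zero hkl ⟨h, hh, hk⟩, zero_mul]

lemma primitive_suppH (hF : HasPivots F p) (hpH : ∀ l, (suppH H (F l)).Nonempty → p l ∈ H)
    {l : ι} (hl : (suppH H (F l)).Nonempty) :
    Primitive (Submodule.span K (Set.range F)) H (suppH H (F l)) := by
  rw [primitive_iff_minimal, minimal_subset_iff]
  refine ⟨⟨hl, F l, Submodule.subset_span ⟨l, rfl⟩, rfl⟩, ?_⟩
  rintro _ ⟨⟨g, hg⟩, G, hG, rfl⟩ hGl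
  obtain ⟨a, ha⟩ := hF.exists_eqOn_smul_of_suppH_subset hpH hG hGl
  have ha0 : a ≠ 0 := left_ne_zero_of_smul (ha hg.1 ▸ hg.2)
  rw [suppH_congr ha, suppH_smul H ha0]

end HasPivots

theorem crossRelated_iff_rrefCrossRelated_general {p : ι → n} (hF : HasPivots F p)
    (hpH : ∀ l, (suppH H (F l)).Nonempty → p l ∈ H) (e e' : n) :
    CrossRelated (Submodule.span K (Set.range F)) H e e' ↔ RrefCrossRelated H F e e' := by
  constructor
  · refine Relation.EqvGen.eqvGen_le ?_ e e'
    rintro a b ⟨S, hS, ha, hb⟩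
    exact hS.rrefCrossRelated ha hb
  · refine Relation.EqvGen.mono ?_ e e'
    rintro a b ⟨l, ha, hb⟩
    exact ⟨suppH H (F l), hF.primitive_suppH hpH ⟨a, ha⟩, ha, hb⟩

end Families

end

/-- Abstract form of Lemma `lm:Mrref`: if `F_1, …, F_m` span `N` and have pivots
`p_1, …, p_m` with `p_l ∈ H` whenever `supp_H(F_l) ≠ ∅`, then the equivalence relation on `H`
generated by "both lie in some `N`-primitive subset of `H`" coincides with the equivalence
relation generated by "both lie in `supp_H(F_l)` for some `l`". -/
theorem crossRelated_iff_rrefCrossRelated {K n : Type*} [Field K] [Fintype n]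
    (H : Set n) {m : ℕ}
    (F : Fin m → (n → K)) (p : Fin m → n)
    (hpiv : ∀ l, F l (p l) ≠ 0)
    (hpiv' : ∀ k l, k ≠ l → F k (p l) = 0)
    (N : Submodule K (n → K))
    (hN : N = Submodule.span K (Set.range F))
    (hpH : ∀ l, (suppH H (F l)).Nonempty → p l ∈ H) :
    ∀ e e' : n,
      Relation.EqvGen (fun a b => ∃ S : Set n, Primitive N H S ∧ a ∈ S ∧ b ∈ S) e e' ↔
      Relation.EqvGen (fun a b => ∃ l, a ∈ suppH H (F l) ∧ b ∈ suppH H (F l)) e e' := by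
  subst hN
  exact crossRelated_iff_rrefCrossRelated_general ⟨hpiv, hpiv'⟩ hpH
end

section
/- Let c ≥ 1 and let F_1, …, F_c be vectors in (n → K) having pivots p_1, …, p_c with every p_j ∈ H. Suppose that supp_H(F_j) has at least 2 elements for every j, and that H has exactly c + 1 elements. Then for every pair of distinct elements e_1, e_2 ∈ H there exists a vector G in the linear span of F_1, …, F_c with supp_H(G) = {e_1, e_2}. (Combinatorial core of the final assertion of Theorem 1.1 [thm:divisorial]: for a divisorial boundary stratum with only horizontal nodes, every pair of nodes is crossed by a defining equation that crosses exactly that pair of nodes.) -/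
/-!
A pivot of `F i` is missed by every other `F j`. Since `H` contains only one element `q` that is
not a pivot, `F i` can cross only `p i` and `q`, and it crosses both because it crosses at least
two elements. A pair containing `q` is therefore crossed exactly by some `F i`; for a pair of
pivots `p i`, `p j`, eliminate the common element `q` between `F i` and `F j`.
-/

open scoped symmDiff

/-- The family `F` has pivots `p`: the vector `F i` is nonzero at its own pivot `p i` and vanishes
at the pivots of all other members, as for the rows of a reduced row echelon form, except that the
entries at the pivots need not be normalized to `1`. -/
structure HasPivots_s5 {ι n K : Type*} [Zero K] (F : ι → n → K) (p : ι → n) : Prop where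
  apply_ne_zero : ∀ i, F i (p i) ≠ 0
  apply_eq_zero : ∀ i j, i ≠ j → F i (p j) = 0

namespace HasPivots_s5

section Zero

variable {ι n K : Type*} [Zero K] {F : ι → n → K} {p : ι → n}

theorem apply_ne_zero_iff (hF : HasPivots_s5 F p) {i j : ι} : F i (p j) ≠ 0 ↔ i = j :=
  ⟨not_imp_comm.mp (hF.apply_eq_zero i j), by rintro rfl; exact hF.apply_ne_zero i⟩

theorem injective (hF : HasPivots_s5 F p) : Function.Injective p := fun i _ hij =>
  hF.apply_ne_zero_iff.mp (hij ▸ hF.apply_ne_zero i)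

theorem exists_eq_insert_range [Finite ι] (hF : HasPivots_s5 F p) {H : Set n} (hpH : ∀ i, p i ∈ H)
    (hH : H.ncard = Nat.card ι + 1) : ∃ q, H = insert q (Set.range p) := by
  have hcard : (Set.range p).ncard + 1 = H.ncard := by
    rw [hH, Set.ncard_range_of_injective hF.injective]
  obtain ⟨q, -, hq⟩ := (Set.exists_eq_insert_iff_ncard (Set.finite_range p)).mpr
    ⟨Set.range_subset_iff.mpr hpH, hcard⟩
  exact ⟨q, hq.symm⟩

end Zero

section Field

variable {ι n K : Type*} [Field K] {F : ι → n → K} {p : ι → n} {H : Set n} {q : n}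

theorem suppH_subset_pair (hF : HasPivots_s5 F p) (hH : H ⊆ insert q (Set.range p)) (i : ι) :
    suppH H (F i) ⊆ {p i, q} := by
  rintro h ⟨hh, hne⟩
  obtain rfl | ⟨j, rfl⟩ := hH hh
  · exact Or.inr rfl
  · exact Or.inl (congrArg p (hF.apply_ne_zero_iff.mp hne).symm)

theorem suppH_eq_pair (hF : HasPivots_s5 F p) (hH : H ⊆ insert q (Set.range p)) {i : ι}
    (hi : (suppH H (F i)).Nontrivial) : suppH H (F i) = {p i, q} := by
  obtain h | h | h | h := Set.subset_pair_iff_eq.mp (hF.suppH_subset_pair hH i)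
  · exact absurd h hi.ne_empty
  · exact absurd h hi.ne_singleton
  · exact absurd h hi.ne_singleton
  · exact h

end Field

end HasPivots_s5

theorem mem_suppH {n K : Type*} [Field K] {H : Set n} {F : n → K} {h : n} :
    h ∈ suppH H F ↔ h ∈ H ∧ F h ≠ 0 :=
  Iff.rfl

section Elimination

variable {n K : Type*} [Field K] {H : Set n} {q : n}

theorem suppH_smul_sub_smul {F G : n → K} (hFG : suppH H F ∩ suppH H G = {q}) :
    suppH H (G q • F - F q • G) = suppH H F ∆ suppH H G := by
  obtain ⟨⟨-, hFq⟩, -, hGq⟩ : q ∈ suppH H F ∩ suppH H G := hFG ▸ Set.mem_singleton q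
  have eq_of_ne : ∀ h ∈ H, F h ≠ 0 → G h ≠ 0 → h = q := fun h hh hF hG =>
    hFG.subset ⟨⟨hh, hF⟩, hh, hG⟩
  ext h
  simp only [Set.mem_symmDiff, mem_suppH, Pi.sub_apply, Pi.smul_apply, smul_eq_mul]
  by_cases hF : F h = 0
  · simp [hF, hFq]
  by_cases hG : G h = 0
  · simp [hF, hG, hGq]
  have cancel : h ∈ H → G q * F h - F q * G h = 0 := fun hh => by
    rw [eq_of_ne h hh hF hG, mul_comm, sub_self]
  simp +contextual [hF, hG, cancel]

theorem suppH_smul_sub_smul_of_pair {F G : n → K} {a b : n} (hF : suppH H F = {a, q})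
    (hG : suppH H G = {b, q}) (hab : a ≠ b) (ha : a ≠ q) (hb : b ≠ q) :
    suppH H (G q • F - F q • G) = {a, b} := by
  have inter_eq : suppH H F ∩ suppH H G = {q} := by grind
  rw [suppH_smul_sub_smul inter_eq, hF, hG]
  grind

end Elimination

theorem exists_eq_pair_supp_general {ι n K : Type*} [Field K] {F : ι → n → K} {p : ι → n}
    (hF : HasPivots_s5 F p) {H : Set n} {q : n} (hH : H ⊆ insert q (Set.range p))
    (hsupp : ∀ i, (suppH H (F i)).Nontrivial) :
    ∀ e₁ ∈ H, ∀ e₂ ∈ H, e₁ ≠ e₂ →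
      ∃ G ∈ Submodule.span K (Set.range F), suppH H G = {e₁, e₂} := by
  have mem_span (i : ι) : F i ∈ Submodule.span K (Set.range F) :=
    Submodule.subset_span (Set.mem_range_self i)
  have supp_eq (i : ι) : suppH H (F i) = {p i, q} := hF.suppH_eq_pair hH (hsupp i)
  have pivot_ne (i : ι) : p i ≠ q := fun h =>
    (hsupp i).ne_singleton (by rw [supp_eq, h, Set.pair_eq_singleton])
  intro e₁ he₁ e₂ he₂ hne
  obtain rfl | ⟨i, rfl⟩ := hH he₁ <;> obtain rfl | ⟨j, rfl⟩ := hH he₂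
  · exact absurd rfl hne
  · exact ⟨F j, mem_span j, (supp_eq j).trans (Set.pair_comm _ _)⟩
  · exact ⟨F i, mem_span i, supp_eq i⟩
  · exact ⟨F j q • F i - F i q • F j,
      sub_mem (Submodule.smul_mem _ _ (mem_span i)) (Submodule.smul_mem _ _ (mem_span j)),
      suppH_smul_sub_smul_of_pair (supp_eq i) (supp_eq j) hne (pivot_ne i) (pivot_ne j)⟩

/-- Combinatorial core of the final assertion of Theorem `thm:divisorial`: let `c ≥ 1` and let
`F_1, …, F_c` have pivots `p_1, …, p_c` all lying in `H`, with `|supp_H(F_j)| ≥ 2` for every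
`j` and `|H| = c + 1`.  Then every pair of distinct `e₁, e₂ ∈ H` equals `supp_H(G)` for some
`G` in the span of the `F_j`. -/
theorem exists_eq_pair_supp {K n : Type*} [Field K] [Fintype n]
    (H : Set n) {c : ℕ} (hc : 1 ≤ c)
    (F : Fin c → (n → K)) (p : Fin c → n)
    (hpiv : ∀ l, F l (p l) ≠ 0)
    (hpiv' : ∀ k l, k ≠ l → F k (p l) = 0)
    (hpH : ∀ j, p j ∈ H)
    (hsupp : ∀ j, 2 ≤ (suppH H (F j)).ncard)
    (hH : H.ncard = c + 1) :
    ∀ e₁ ∈ H, ∀ e₂ ∈ H, e₁ ≠ e₂ →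
      ∃ G ∈ Submodule.span K (Set.range F), suppH H G = {e₁, e₂} := by
  have hF : HasPivots_s5 F p := ⟨hpiv, hpiv'⟩
  obtain ⟨q, hq⟩ := hF.exists_eq_insert_range hpH (by simpa using hH)
  exact exists_eq_pair_supp_general hF hq.subset fun j =>
    (Set.one_lt_ncard_iff_nontrivial_and_finite.mp (hsupp j)).1
end

section
/- Let c ≥ 1 and let F_1, …, F_c be vectors in (n → K) having pivots p_1, …, p_c with every p_j ∈ H, and suppose that supp_H(F_j) has at least 2 elements for every j. Then the union ⋃_{j=1}^{c} supp_H(F_j) has at least c + 1 elements. (Step in the proof of Theorem 1.1 [thm:divisorial]: since every lost defining equation crosses at least two horizontal nodes and the pivots are distinct horizontal nodes, either H(Γ′) = 0 or c(Γ′) ≤ H(Γ′) − 1.) -/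
/-! The pivots are distinct elements of the union. The `H`-support of one `F i` contains its own
pivot but none of the others, so a second element of that support is one element more. -/

/-- The family `F` has pivots `p`, as the rows of a matrix in reduced row echelon form do; the
pivot entries are not normalized to `1`, and the columns are not ordered. -/
structure HasPivots_s6 {ι K n : Type*} [Zero K] (F : ι → n → K) (p : ι → n) : Prop where
  apply_self_ne_zero : ∀ l, F l (p l) ≠ 0
  apply_of_ne : ∀ k l, k ≠ l → F k (p l) = 0

namespace HasPivots_s6

section Zero

variable {ι K n : Type*} [Zero K] {F : ι → n → K} {p : ι → n}

theorem apply_ne_zero_iff_s6 (hp : HasPivots_s6 F p) {k l : ι} : F k (p l) ≠ 0 ↔ k = l where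
  mp h := by_contra fun hkl => h (hp.apply_of_ne k l hkl)
  mpr h := h ▸ hp.apply_self_ne_zero k

theorem injective_s6 (hp : HasPivots_s6 F p) : Function.Injective p := fun k _ hkl =>
  hp.apply_ne_zero_iff_s6.mp (hkl ▸ hp.apply_self_ne_zero k)

theorem notMem_range_of_ne (hp : HasPivots_s6 F p) {i : ι} {x : n} (hx : F i x ≠ 0)
    (hne : x ≠ p i) : x ∉ Set.range p := by
  rintro ⟨j, rfl⟩
  exact hne (congrArg p (hp.apply_ne_zero_iff_s6.mp hx).symm)

end Zero

variable {ι K n : Type*} [Field K] {F : ι → n → K} {p : ι → n} {H : Set n}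

theorem range_subset_iUnion_suppH (hp : HasPivots_s6 F p) (hpH : ∀ j, p j ∈ H) :
    Set.range p ⊆ ⋃ j, suppH H (F j) :=
  Set.range_subset_iff.mpr fun j =>
    Set.mem_iUnion_of_mem j ⟨hpH j, hp.apply_self_ne_zero j⟩

end HasPivots_s6

theorem card_union_supp_ge_general {ι K n : Type*} [Field K] {H : Set n} {F : ι → n → K}
    {p : ι → n} (hp : HasPivots_s6 F p) (hpH : ∀ j, p j ∈ H) {i : ι}
    (hi : (suppH H (F i)).Nontrivial) :
    ENat.card ι + 1 ≤ (⋃ j, suppH H (F j)).encard := by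
  obtain ⟨x, hx, hne⟩ := hi.exists_ne (p i)
  have hx_range : x ∉ Set.range p := hp.notMem_range_of_ne hx.2 hne
  have h_subset : insert x (Set.range p) ⊆ ⋃ j, suppH H (F j) :=
    Set.insert_subset (Set.mem_iUnion_of_mem i hx) (hp.range_subset_iUnion_suppH hpH)
  calc ENat.card ι + 1 ≤ (Set.range p).encard + 1 := by
        gcongr
        exact hp.injective_s6.encard_range
    _ = (insert x (Set.range p)).encard := (Set.encard_insert_of_notMem hx_range).symm
    _ ≤ (⋃ j, suppH H (F j)).encard := Set.encard_le_encard h_subset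

/-- Step in the proof of Theorem `thm:divisorial`: if `c ≥ 1` and `F_1, …, F_c` have pivots
`p_1, …, p_c` all lying in `H`, with `|supp_H(F_j)| ≥ 2` for every `j`, then the union
`⋃ⱼ supp_H(F_j)` has at least `c + 1` elements. -/
theorem card_union_supp_ge {K n : Type*} [Field K] [Fintype n]
    (H : Set n) {c : ℕ} (hc : 1 ≤ c)
    (F : Fin c → (n → K)) (p : Fin c → n)
    (hpiv : ∀ l, F l (p l) ≠ 0)
    (hpiv' : ∀ k l, k ≠ l → F k (p l) = 0)
    (hpH : ∀ j, p j ∈ H)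
    (hsupp : ∀ j, 2 ≤ (suppH H (F j)).ncard) :
    c + 1 ≤ (⋃ j, suppH H (F j)).ncard := by
  rw [← Nat.cast_le (α := ℕ∞), (Set.toFinite _).cast_ncard_eq]
  simpa using card_union_supp_ge_general ⟨hpiv, hpiv'⟩ hpH
    (Set.one_lt_ncard_iff_nontrivial.mp (hsupp ⟨0, hc⟩))
end

section
/- Let S ⊆ I be a subset, and suppose a vector F satisfies: (i) F lies in the linear span of {λ(a) : a ∈ S}; and (ii) F is a finite sum of elements of N, each of which lies in the linear span of {λ(a), λ(b)} for some pair of indices a, b ∈ I. Then F is a finite sum of elements of N, each of which lies in the linear span of {λ(a), λ(b)} for some pair of indices a, b ∈ S. (Linear-algebra core of the paper's Proposition [prop:pairwise-circum]: a defining equation of an affine invariant manifold in the minimal stratum that is a linear combination of the horizontal vanishing cycles λ_i with i ∈ S, and is a sum of pairwise-proportionality defining equations b λ_j + c λ_l, is in fact a sum of pairwise-proportionality defining equations involving only vanishing cycles indexed by S.) -/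
/-!
Send each `lam a` to a multiple of some `lam s` with `s ∈ S`: to itself if `a ∈ S`, to a multiple
congruent to it modulo `N` if there is one, and to `0` otherwise. By linear independence this
extends to an endomorphism `φ` of `V` that is the identity on the span of the `lam s`, so
`F = φ F = ∑ i, φ (g i)`. Moreover `φ` preserves membership in `N` for pairwise relations: if
`x • lam a + y • lam b ∈ N` and `lam a` is congruent to a multiple of some `lam s`, then so is
`lam b`, unless `y = 0`.
-/

open Submodule

section Extension

variable {K V V' ι : Type*} [DivisionRing K] [AddCommGroup V] [Module K V]
  [AddCommGroup V'] [Module K V']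

theorem exists_linearMap_apply_eq_of_linearIndependent {v : ι → V}
    (hv : LinearIndependent K v) (f : ι → V') : ∃ φ : V →ₗ[K] V', ∀ i, φ (v i) = f i := by
  obtain ⟨φ, hφ⟩ := LinearMap.exists_extend ((Module.Basis.span hv).constr ℕ f)
  refine ⟨φ, fun i ↦ ?_⟩
  have hφi := LinearMap.congr_fun hφ (Module.Basis.span hv i)
  rwa [Module.Basis.constr_basis, LinearMap.comp_apply, subtype_apply,
    Module.Basis.span_apply] at hφi

theorem exists_linearMap_eqOn_of_linearIndepOn_mkQ {W : Submodule K V} {v : ι → V} {s : Set ι}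
    (hv : LinearIndepOn K (W.mkQ ∘ v) s) (φ₀ : V →ₗ[K] V') (f : ι → V') :
    ∃ φ : V →ₗ[K] V', Set.EqOn φ φ₀ W ∧ ∀ i ∈ s, φ (v i) = f i := by
  obtain ⟨ψ, hψ⟩ :=
    exists_linearMap_apply_eq_of_linearIndependent hv fun i : s ↦ f i - φ₀ (v i)
  refine ⟨φ₀ + ψ ∘ₗ W.mkQ, fun w hw ↦ ?_, fun i hi ↦ ?_⟩
  · simp [(Quotient.mk_eq_zero W).2 hw]
  · have hψi : ψ (W.mkQ (v i)) = f i - φ₀ (v i) := hψ ⟨i, hi⟩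
    rw [LinearMap.add_apply, LinearMap.comp_apply, hψi, add_sub_cancel]

end Extension

section Proportional

variable {K V : Type*} [DivisionRing K] [AddCommGroup V] [Module K V]
  {N : Submodule K V} {X : Set V}

/-- Proportionality modulo `N`: the vector `v` is congruent modulo `N` to a scalar multiple,
possibly zero, of some element of `X`. -/
def IsProportionalMod (N : Submodule K V) (X : Set V) (v : V) : Prop :=
  ∃ w ∈ X, v ∈ (K ∙ w) ⊔ N

theorem IsProportionalMod.of_smul_add_smul_mem {u v : V} {x y : K}
    (hu : IsProportionalMod N X u) (h : x • u + y • v ∈ N) (hy : y ≠ 0) :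
    IsProportionalMod N X v := by
  obtain ⟨w, hw, huw⟩ := hu
  refine ⟨w, hw, (smul_mem_iff _ hy).1 ?_⟩
  exact (Submodule.add_mem_iff_right _ (smul_mem _ x huw)).1 (mem_sup_right h)

/-- A choice, for every vector, of a multiple `r v` of some element of `X`, fixing `X` and congruent
to `v` modulo `N` whenever such a multiple exists. The value is `0` when there is none. No linearity
is assumed of `r`. -/
structure IsProportionalRetraction (N : Submodule K V) (X : Set V) (r : V → V) : Prop where
  exists_mem_span_singleton (v : V) : ∃ w ∈ X, r v ∈ K ∙ w
  apply_eq_self {v : V} : v ∈ X → r v = v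
  sub_apply_mem {v : V} : IsProportionalMod N X v → v - r v ∈ N
  apply_eq_zero {v : V} : ¬ IsProportionalMod N X v → r v = 0

theorem exists_isProportionalRetraction (N : Submodule K V) (hX : X.Nonempty) :
    ∃ r : V → V, IsProportionalRetraction N X r := by
  have exists_value (v : V) : ∃ v' : V, (∃ w ∈ X, v' ∈ K ∙ w) ∧ (v ∈ X → v' = v) ∧
      (IsProportionalMod N X v → v - v' ∈ N) ∧ (¬ IsProportionalMod N X v → v' = 0) := by
    by_cases hvX : v ∈ X
    · have hv : IsProportionalMod N X v := ⟨v, hvX, mem_sup_left (mem_span_singleton_self v)⟩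
      exact ⟨v, ⟨v, hvX, mem_span_singleton_self v⟩, fun _ ↦ rfl, fun _ ↦ by simp,
        fun h ↦ absurd hv h⟩
    by_cases hv : IsProportionalMod N X v
    · obtain ⟨w, hw, hvw⟩ := hv
      obtain ⟨v', hv', n, hn, rfl⟩ := mem_sup.1 hvw
      exact ⟨v', ⟨w, hw, hv'⟩, fun h ↦ absurd h hvX, fun _ ↦ by simpa using hn,
        fun h ↦ absurd ⟨w, hw, hvw⟩ h⟩
    · obtain ⟨w, hw⟩ := hX
      exact ⟨0, ⟨w, hw, zero_mem _⟩, fun h ↦ absurd h hvX, fun h ↦ absurd h hv, fun _ ↦ rfl⟩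
  choose r hspan hself hsub hzero using exists_value
  exact ⟨r, hspan, hself _, hsub _, hzero _⟩

namespace IsProportionalRetraction

variable {r : V → V} {u v : V}

theorem smul_add_smul_mem_of_isProportionalMod (hr : IsProportionalRetraction N X r)
    (hu : IsProportionalMod N X u) {x y : K} (h : x • u + y • v ∈ N) :
    x • r u + y • r v ∈ N := by
  have hyv : y • (v - r v) ∈ N := by
    by_cases hy : y = 0
    · simp [hy]
    · exact N.smul_mem y (hr.sub_apply_mem (hu.of_smul_add_smul_mem h hy))
  have hxu : x • (u - r u) ∈ N := N.smul_mem x (hr.sub_apply_mem hu)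
  have hsub : x • r u + y • r v = x • u + y • v - (x • (u - r u) + y • (v - r v)) := by
    simp only [smul_sub]
    abel
  exact hsub ▸ N.sub_mem h (N.add_mem hxu hyv)

theorem smul_add_smul_mem (hr : IsProportionalRetraction N X r) {x y : K}
    (h : x • u + y • v ∈ N) : x • r u + y • r v ∈ N := by
  by_cases hu : IsProportionalMod N X u
  · exact hr.smul_add_smul_mem_of_isProportionalMod hu h
  by_cases hv : IsProportionalMod N X v
  · rw [add_comm] at h ⊢
    exact hr.smul_add_smul_mem_of_isProportionalMod hv h
  · simp [hr.apply_eq_zero hu, hr.apply_eq_zero hv]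

theorem exists_smul_add_smul_mem_span_pair (hr : IsProportionalRetraction N X r) (u v : V)
    (x y : K) : ∃ w ∈ X, ∃ z ∈ X, x • r u + y • r v ∈ span K {w, z} := by
  obtain ⟨w, hw, hu⟩ := hr.exists_mem_span_singleton u
  obtain ⟨z, hz, hv⟩ := hr.exists_mem_span_singleton v
  refine ⟨w, hw, z, hz, ?_⟩
  rw [span_insert]
  exact add_mem_sup (smul_mem _ x hu) (smul_mem _ y hv)

theorem map_mem_and_exists_mem_span_pair (hr : IsProportionalRetraction N X r) {φ : V →ₗ[K] V}
    (hu : φ u = r u) (hv : φ v = r v) {g : V} (hgN : g ∈ N) (hg : g ∈ span K {u, v}) :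
    φ g ∈ N ∧ ∃ w ∈ X, ∃ z ∈ X, φ g ∈ span K {w, z} := by
  obtain ⟨x, y, rfl⟩ := mem_span_pair.1 hg
  rw [map_add, map_smul, map_smul, hu, hv]
  exact ⟨hr.smul_add_smul_mem hgN, hr.exists_smul_add_smul_mem_span_pair u v x y⟩

end IsProportionalRetraction

end Proportional

theorem sum_of_pairwise_in_S_general {K V I : Type*} [DivisionRing K] [AddCommGroup V] [Module K V]
    (lam : I → V) (S : Set I) (hlam : LinearIndepOn K ((span K (lam '' S)).mkQ ∘ lam) Sᶜ)
    (N : Submodule K V) (F : V) (hF : F ∈ span K (lam '' S))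
    (hsum : ∃ (m : ℕ) (g : Fin m → V),
      (∀ i, g i ∈ N ∧ ∃ a b : I, g i ∈ span K {lam a, lam b}) ∧ F = ∑ i, g i) :
    ∃ (m : ℕ) (g : Fin m → V),
      (∀ i, g i ∈ N ∧ ∃ a ∈ S, ∃ b ∈ S, g i ∈ span K {lam a, lam b}) ∧ F = ∑ i, g i := by
  rcases S.eq_empty_or_nonempty with rfl | hS
  · exact ⟨0, Fin.elim0, fun i ↦ i.elim0, by simpa using hF⟩
  obtain ⟨m, g, hg, hFg⟩ := hsum
  obtain ⟨r, hr⟩ := exists_isProportionalRetraction N (hS.image lam)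
  obtain ⟨φ, hφ_id, hφ_compl⟩ :=
    exists_linearMap_eqOn_of_linearIndepOn_mkQ hlam LinearMap.id (r ∘ lam)
  have hφ (a : I) : φ (lam a) = r (lam a) := by
    by_cases ha : a ∈ S
    · have ha' : lam a ∈ lam '' S := Set.mem_image_of_mem lam ha
      exact (hφ_id (subset_span ha')).trans (hr.apply_eq_self ha').symm
    · exact hφ_compl a ha
  refine ⟨m, fun i ↦ φ (g i), fun i ↦ ?_, ?_⟩
  · obtain ⟨hgN, a, b, hgab⟩ := hg i
    simpa only [Set.exists_mem_image] using
      hr.map_mem_and_exists_mem_span_pair (hφ a) (hφ b) hgN hgab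
  · calc F = φ F := (hφ_id hF).symm
      _ = ∑ i, φ (g i) := by rw [hFg, map_sum]

/-- Linear-algebra core of Proposition `prop:pairwise-circum`: let `lam : I → V` be a linearly
independent family, `N ⊆ V` a subspace and `S ⊆ I`.  If `F` lies in the span of
`{lam a : a ∈ S}` and `F` is a finite sum of elements of `N`, each lying in the span of
`{lam a, lam b}` for some `a, b ∈ I`, then `F` is a finite sum of elements of `N`, each lying
in the span of `{lam a, lam b}` for some `a, b ∈ S`. -/
theorem sum_of_pairwise_in_S {K V I : Type*} [Field K] [AddCommGroup V] [Module K V]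
    (lam : I → V) (hlam : LinearIndependent K lam)
    (N : Submodule K V) (S : Set I) (F : V)
    (hF : F ∈ Submodule.span K (lam '' S))
    (hsum : ∃ (m : ℕ) (g : Fin m → V),
      (∀ i, g i ∈ N ∧ ∃ a b : I, g i ∈ Submodule.span K {lam a, lam b}) ∧
      F = ∑ i, g i) :
    ∃ (m : ℕ) (g : Fin m → V),
      (∀ i, g i ∈ N ∧ ∃ a ∈ S, ∃ b ∈ S, g i ∈ Submodule.span K {lam a, lam b}) ∧
      F = ∑ i, g i := by
  exact sum_of_pairwise_in_S_general lam S
    ((linearIndepOn_union_iff_quotient disjoint_compl_right).1 (hlam.linearIndepOn _)).2 N F hF hsum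
end
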